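/- Let α ∈ ℂ with α ≠ 0 and set β = 1/α. Let d ≥ 1 and let P ∈ ℂ[λ,x₁,x₂,…] be a polynomial homogeneous of degree d with respect to the grading deg λ = 1, deg x_k = k, satisfying (1/k!)·∂^kP/∂λ^k = α·∂P/∂x_k for every k ≥ 1. Then there exists γ ∈ ℂ such that P(λ;x₁,x₂,x₃,…) = γ·S_d(λ + β·x₁/1!, β·x₂/2!, β·x₃/3!, …), i.e. P is obtained from the elementary Schur polynomial S_d(y₁,…,y_d) by substituting y₁ ↦ λ + β·x₁/1! and y_k ↦ β·x_k/k! for 2 ≤ k ≤ d. -/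

import Mathlib

open MvPolynomial

/-- The elementary Schur polynomial `S_n(y₁,y₂,…) = ∑_{i₁+2i₂+⋯=n} ∏_k y_k^{i_k}/i_k!`,
in the polynomial ring `ℚ[y₁,y₂,…] ⊆ MvPolynomial ℕ ℚ` with `y_k = X k` for `k ≥ 1`.
(In any solution of `∑_{k=1}^n k·i_k = n` each `i_k` is at most `n`, so it suffices to sum
over exponent tuples `i : Fin n → Fin (n+1)`.) -/
noncomputable def schur (n : ℕ) : MvPolynomial ℕ ℚ :=
  ∑ i : Fin n → Fin (n + 1),
    if (∑ k : Fin n, (k.1 + 1) * (i k).1) = n then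
      ∏ k : Fin n, C (((i k).1.factorial : ℚ)⁻¹) * X (k.1 + 1) ^ ((i k).1)
    else 0

/- We work in `ℂ[λ,x₁,x₂,…] = MvPolynomial ℕ ℂ`, where `X 0 = λ` and `X k = x_k` for `k ≥ 1`. -/


noncomputable def ff (m : ℕ →₀ ℕ) : ℚ := m.prod fun _ e => ((e.factorial : ℚ))⁻¹

lemma ff_add (m : ℕ →₀ ℕ) (k : ℕ) :
    ff (m + Finsupp.single k 1) * ((m k : ℚ) + 1) = ff m := by
  classical
  have h1 : ff (m + Finsupp.single k 1) =
      ∏ x ∈ insert k m.support, ((((m + Finsupp.single k 1 : ℕ →₀ ℕ) x).factorial : ℚ))⁻¹ := by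
    apply Finsupp.prod_of_support_subset
    · intro x hx
      by_cases hk : x = k
      · simp [hk]
      · have h2 : (k = x) = False := by simp [Ne.symm hk]
        simp [Finsupp.single_apply, hk, h2] at hx ⊢
        exact hx
    · simp
  have h2 : ff m = ∏ x ∈ insert k m.support, (((m x).factorial : ℚ))⁻¹ := by
    apply Finsupp.prod_of_support_subset
    · exact Finset.subset_insert _ _
    · simp
  have hk : k ∈ insert k m.support := Finset.mem_insert_self _ _
  rw [h1, h2, ← Finset.mul_prod_erase _ _ hk, ← Finset.mul_prod_erase _ _ hk]
  have h3 : ∏ x ∈ (insert k m.support).erase k, ((((m + Finsupp.single k 1 : ℕ →₀ ℕ) x).factorial : ℚ))⁻¹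
      = ∏ x ∈ (insert k m.support).erase k, (((m x).factorial : ℚ))⁻¹ := by
    apply Finset.prod_congr rfl
    intro x hx
    have := Finset.ne_of_mem_erase hx
    simp [Finsupp.single_apply, this.symm]
  rw [h3]
  have h4 : ((m k : ℚ) + 1) ≠ 0 := by positivity
  have h5 : ((m k).factorial : ℚ) ≠ 0 := by positivity
  simp [Nat.factorial_succ]
  field_simp

noncomputable def emb {n : ℕ} (i : Fin n → Fin (n + 1)) : ℕ →₀ ℕ :=
  ∑ k : Fin n, Finsupp.single (k.1 + 1) (i k).1

lemma emb_zero {n : ℕ} (i : Fin n → Fin (n + 1)) : emb i 0 = 0 := by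
  simp [emb, Finsupp.finsetSum_apply]

lemma emb_succ {n : ℕ} (i : Fin n → Fin (n + 1)) (k : Fin n) : emb i (k.1 + 1) = (i k).1 := by
  simp only [emb, Finsupp.finsetSum_apply]
  rw [Finset.sum_eq_single k]
  · simp
  · intro b _ hb
    have : b.1 ≠ k.1 := fun h => hb (Fin.ext h)
    simp [Finsupp.single_apply, this]
  · simp

lemma emb_big {n : ℕ} (i : Fin n → Fin (n + 1)) (k : ℕ) (hk : n < k) : emb i k = 0 := by
  simp only [emb, Finsupp.finsetSum_apply]
  apply Finset.sum_eq_zero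
  intro b _
  have : b.1 + 1 ≠ k := by omega
  simp [Finsupp.single_apply, this]

lemma emb_weight {n : ℕ} (i : Fin n → Fin (n + 1)) :
    Finsupp.weight (id : ℕ → ℕ) (emb i) = ∑ k : Fin n, (k.1 + 1) * (i k).1 := by
  simp [emb, map_sum, Finsupp.weight_single, mul_comm]

lemma term_eq {n : ℕ} (i : Fin n → Fin (n + 1)) :
    (∏ k : Fin n, C (((i k).1.factorial : ℚ)⁻¹) * X (k.1 + 1) ^ ((i k).1) : MvPolynomial ℕ ℚ)
    = monomial (emb i) (ff (emb i)) := by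
  have h : ff (emb i) = ∏ k : Fin n, (((i k).1.factorial : ℚ)⁻¹) := by
    have : ff (emb i) = ∏ x ∈ Finset.range (n + 1), (((emb i x).factorial : ℚ))⁻¹ := by
      apply Finsupp.prod_of_support_subset
      · intro x hx
        rw [Finset.mem_range]
        by_contra hc
        exact (Finsupp.mem_support_iff.mp hx) (emb_big i x (by omega))
      · simp
    rw [this, Finset.prod_range_succ', emb_zero, Finset.prod_range]
    simp [emb_succ]
  rw [h, emb, monomial_sum_index]
  rw [Finset.prod_mul_distrib, map_prod]
  simp [X_pow_eq_monomial]

lemma coeff_schur (n : ℕ) (m : ℕ →₀ ℕ) :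
    coeff m (schur n) = if m 0 = 0 ∧ Finsupp.weight (id : ℕ → ℕ) m = n then ff m else 0 := by
  classical
  have h0 : schur n = ∑ i : Fin n → Fin (n + 1),
      if Finsupp.weight (id : ℕ → ℕ) (emb i) = n then monomial (emb i) (ff (emb i)) else 0 := by
    unfold schur
    refine Finset.sum_congr rfl fun i _ => ?_
    rw [term_eq, emb_weight]
  rw [h0, coeff_sum]
  split_ifs with h
  · obtain ⟨hz, hw⟩ := h
    have hle : ∀ k, k * m k ≤ n := by
      intro k
      by_cases hk : k = 0
      · simp [hk]
      · rw [← hw, Finsupp.weight_apply, Finsupp.sum]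
        by_cases hs : k ∈ m.support
        · have := Finset.single_le_sum (f := fun a => m a • (id a)) (fun _ _ => Nat.zero_le _) hs
          simpa [mul_comm] using this
        · simp [Finsupp.notMem_support_iff.mp hs]
    let i : Fin n → Fin (n + 1) := fun k => ⟨m (k.1 + 1), by
      have := hle (k.1 + 1)
      nlinarith⟩
    have hi : emb i = m := by
      ext x
      rcases x with _ | x
      · rw [emb_zero, hz]
      · by_cases hx : x < n
        · exact emb_succ i ⟨x, hx⟩
        · rw [emb_big i _ (by omega)]
          have := hle (x + 1)
          by_contra hc
          have : 1 ≤ m (x + 1) := by omega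
          nlinarith
    rw [Finset.sum_eq_single i]
    · rw [hi, if_pos hw, coeff_monomial, if_pos rfl]
    · intro j _ hj
      split_ifs
      · rw [coeff_monomial, if_neg]
        intro hc
        apply hj
        funext k
        apply Fin.ext
        rw [← emb_succ j k, ← emb_succ i k, hc, hi]
      · simp
    · simp
  · apply Finset.sum_eq_zero
    intro i _
    split_ifs with hw
    · rw [coeff_monomial, if_neg]
      rintro rfl
      exact h ⟨emb_zero i, hw⟩
    · simp

lemma coeff_pd {R : Type*} [CommSemiring R] (k : ℕ) (p : MvPolynomial ℕ R) (m : ℕ →₀ ℕ) :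
    coeff m (pderiv k p) = coeff (m + Finsupp.single k 1) p * ((m k : R) + 1) := by
  classical
  induction p using MvPolynomial.induction_on' with
  | monomial u a =>
    rw [pderiv_monomial, coeff_monomial, coeff_monomial]
    by_cases h : u = m + Finsupp.single k 1
    · subst h
      simp
    · rw [if_neg h]
      split_ifs with h2
      · by_cases hk : u k = 0
        · simp [hk]
        · exfalso
          apply h
          rw [← h2, tsub_add_cancel_of_le]
          rw [Finsupp.single_le_iff]
          omega
      · simp
  | add p q hp hq => simp [hp, hq, add_mul]

lemma pderiv_schur_zero (n : ℕ) : pderiv 0 (schur n) = 0 := by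
  ext m
  rw [coeff_pd, coeff_schur, if_neg] <;> simp

lemma pderiv_schur_le (n k : ℕ) (hk : 1 ≤ k) (hn : k ≤ n) :
    pderiv k (schur n) = schur (n - k) := by
  ext m
  rw [coeff_pd, coeff_schur, coeff_schur]
  have h0 : (m + Finsupp.single k 1 : ℕ →₀ ℕ) 0 = m 0 := by
    have : k ≠ 0 := by omega
    simp [Finsupp.single_apply, this]
  rw [h0, map_add, Finsupp.weight_single, ← ff_add m k]
  have : (Finsupp.weight (id : ℕ → ℕ) m + 1 • id k = n) ↔
    (Finsupp.weight (id : ℕ → ℕ) m = n - k) := by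
    simp only [id, one_smul]; omega
  simp only [this, ite_mul, zero_mul]

lemma pderiv_schur_gt (n k : ℕ) (hn : n < k) :
    pderiv k (schur n) = 0 := by
  ext m
  rw [coeff_pd, coeff_schur, if_neg]
  · simp
  · rw [map_add, Finsupp.weight_single]
    simp only [id, one_smul]; omega

lemma chain (g : ℕ → MvPolynomial ℕ ℂ) (j k : ℕ) (c c' : ℂ)
    (hg : ∀ i, pderiv j (g i) = (if i = k then C c else 0) + (if i = 0 then C c' else 0))
    (p : MvPolynomial ℕ ℚ) :
    pderiv j (aeval g p) = C c * aeval g (pderiv k p) + C c' * aeval g (pderiv 0 p) := by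
  classical
  induction p using MvPolynomial.induction_on with
  | C a =>
    have : aeval g (C a : MvPolynomial ℕ ℚ) = C (a : ℂ) := by
      rw [aeval_C, MvPolynomial.algebraMap_apply]; simp
    rw [this]
    simp
  | add p q hp hq => simp only [map_add, hp, hq]; ring
  | mul_X p i hp =>
    simp only [map_mul, Derivation.leibniz, hp, aeval_X, hg, pderiv_X, Pi.single_apply,
      smul_eq_mul, map_add]
    simp only [apply_ite (aeval g), map_one, map_zero]
    have e1 : (k = i) = (i = k) := propext eq_comm
    have e2 : (0 = i) = (i = 0) := propext eq_comm
    try simp only [e1, e2]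
    generalize aeval g p = A
    generalize aeval g (pderiv k p) = B
    generalize aeval g (pderiv 0 p) = D
    split_ifs <;> ring

noncomputable def gg (β : ℂ) : ℕ → MvPolynomial ℕ ℂ := fun k => if k = 1 then X 0 + C β * X 1
        else C (β * ((k.factorial : ℂ))⁻¹) * X k

lemma gg0 (β : ℂ) (n : ℕ) : pderiv 0 (aeval (gg β) (schur n)) =
    if 1 ≤ n then aeval (gg β) (schur (n - 1)) else 0 := by
  rw [chain (gg β) 0 1 1 β, pderiv_schur_zero]
  · split_ifs with h
    · simp [pderiv_schur_le n 1 le_rfl h]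
    · simp [pderiv_schur_gt n 1 (by omega)]
  · intro i
    unfold gg
    by_cases h1 : i = 1
    · subst h1; simp [pderiv_X]
    · by_cases h2 : i = 0
      · subst h2; simp [pderiv_X]
      · simp [h1, h2, pderiv_X, Pi.single_apply]

lemma ggk (β : ℂ) (n k : ℕ) (hk : 1 ≤ k) : pderiv k (aeval (gg β) (schur n)) =
    if k ≤ n then C (β * ((k.factorial : ℂ))⁻¹) * aeval (gg β) (schur (n - k)) else 0 := by
  rw [chain (gg β) k k (β * ((k.factorial : ℂ))⁻¹) 0]
  · split_ifs with h
    · simp [pderiv_schur_le n k hk h]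
    · simp [pderiv_schur_gt n k (by omega)]
  · intro i
    unfold gg
    by_cases h1 : i = 1
    · subst h1
      by_cases h2 : k = 1
      · subst h2; simp [pderiv_X]
      · have h3 : (1 = k) = False := by simp [Ne.symm h2]
        have h4 : k ≠ 0 := by omega
        simp [pderiv_X, Pi.single_apply, h2, h3, h4]
    · by_cases h2 : i = k
      · subst h2; simp [h1, pderiv_X]
      · simp [h1, h2, pderiv_X, Pi.single_apply]

lemma gg0_iter (β : ℂ) (k n : ℕ) : (fun q => pderiv 0 q)^[k] (aeval (gg β) (schur n)) =
    if k ≤ n then aeval (gg β) (schur (n - k)) else 0 := by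
  induction k with
  | zero => simp
  | succ k ih =>
    rw [Function.iterate_succ_apply', ih]
    by_cases h : k ≤ n
    · simp only [if_pos h, gg0]
      by_cases h2 : k + 1 ≤ n
      · rw [if_pos h2, if_pos (by omega)]; rfl
      · rw [if_neg h2, if_neg (by omega)]
    · rw [if_neg h, if_neg (by omega)]; simp

lemma cc (β : ℂ) (p : MvPolynomial ℕ ℚ) :
    coeff 0 (aeval (gg β) p) = ((coeff 0 p : ℚ) : ℂ) := by
  induction p using MvPolynomial.induction_on with
  | C a =>
    have : aeval (gg β) (C a : MvPolynomial ℕ ℚ) = C (a : ℂ) := by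
      rw [aeval_C, MvPolynomial.algebraMap_apply]; simp
    rw [this]; simp
  | add p q hp hq => simp [hp, hq]
  | mul_X p i hp =>
    simp only [← constantCoeff_eq, map_mul, aeval_X, constantCoeff_X]
    unfold gg
    split_ifs <;> simp

lemma coeffQ (β : ℂ) (n d : ℕ) : coeff (Finsupp.single 0 n) (aeval (gg β) (schur d)) =
    if n = d then ((n.factorial : ℂ))⁻¹ else 0 := by
  induction n generalizing d with
  | zero =>
    rw [Finsupp.single_zero, cc, coeff_schur]
    simp [ff]
    split_ifs <;> simp
  | succ n ih =>
    have h := coeff_pd 0 (aeval (gg β) (schur d)) (Finsupp.single 0 n)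
    have hn : ((n : ℂ) + 1) ≠ 0 := by exact_mod_cast Nat.succ_ne_zero n
    have hf : ((n.factorial : ℂ)) ≠ 0 := by exact_mod_cast n.factorial_ne_zero
    rw [← Finsupp.single_add, gg0, Finsupp.single_eq_same] at h
    rw [eq_comm, ← eq_div_iff hn] at h
    rw [h]
    by_cases h1 : 1 ≤ d
    · rw [if_pos h1, ih]
      by_cases h2 : n + 1 = d
      · rw [if_pos h2, if_pos (by omega), Nat.factorial_succ]
        push_cast
        field_simp
      · rw [if_neg h2, if_neg (by omega)]; simp
    · rw [if_neg h1, if_neg (by omega)]; simp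

noncomputable abbrev ee : (ℕ →₀ ℕ) →+ ℕ := Finsupp.weight (fun k : ℕ => if k = 0 then 0 else 1)

lemma iter_zero (N : ℕ) (R : MvPolynomial ℕ ℂ) (h : ∀ m, ee m = N → coeff m R = 0) (k : ℕ) :
    ∀ m, ee m = N → coeff m ((fun q => pderiv 0 q)^[k] R) = 0 := by
  induction k with
  | zero => simpa using h
  | succ k ih =>
    intro m hm
    rw [Function.iterate_succ_apply', coeff_pd, ih, zero_mul]
    rw [map_add, hm, Finsupp.weight_single]; simp

lemma uniq (α : ℂ) (hα : α ≠ 0) (R : MvPolynomial ℕ ℂ)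
    (hsys : ∀ k : ℕ, 1 ≤ k →
      C ((k.factorial : ℂ)⁻¹) * (fun q => pderiv 0 q)^[k] R = C α * pderiv k R)
    (h0 : ∀ n, coeff (Finsupp.single 0 n) R = 0) : R = 0 := by
  have key : ∀ N, ∀ m, ee m = N → coeff m R = 0 := by
    intro N
    induction N with
    | zero =>
      intro m hm
      have : m = Finsupp.single 0 (m 0) := by
        ext x
        by_cases hx : x = 0
        · simp [hx]
        · rw [Finsupp.single_apply, if_neg (Ne.symm hx)]
          by_contra hc
          rw [Finsupp.weight_apply, Finsupp.sum, Finset.sum_eq_zero_iff] at hm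
          have := hm x (Finsupp.mem_support_iff.mpr hc)
          simp [hx] at this
          exact hc this
      rw [this]; exact h0 _
    | succ N ih =>
      intro m hm
      have : ∃ k, k ≠ 0 ∧ m k ≠ 0 := by
        by_contra hc
        push Not at hc
        have : ee m = 0 := by
          rw [Finsupp.weight_apply, Finsupp.sum]
          apply Finset.sum_eq_zero
          intro x _
          by_cases hx : x = 0
          · simp [hx]
          · simp [hc x hx]
        omega
      obtain ⟨k, hk, hmk⟩ := this
      have hle : Finsupp.single k 1 ≤ m := by
        rw [Finsupp.single_le_iff]; omega
      obtain ⟨m', rfl⟩ := exists_add_of_le hle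
      rw [add_comm] at hm ⊢
      have hm' : ee m' = N := by
        rw [map_add, Finsupp.weight_single] at hm
        simpa [hk] using hm
      have := congrArg (coeff m') (hsys k (by omega))
      rw [coeff_C_mul, coeff_C_mul, iter_zero N R ih k m' hm', coeff_pd] at this
      have hn : ((m' k : ℂ) + 1) ≠ 0 := by exact_mod_cast Nat.succ_ne_zero (m' k)
      simpa [hα, hn] using this.symm
  ext m
  simpa using key _ m rfl

lemma iter_lin (k : ℕ) (c : ℂ) (P Q : MvPolynomial ℕ ℂ) :
    (fun q => pderiv 0 q)^[k] (P - C c * Q) =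
    (fun q => pderiv 0 q)^[k] P - C c * (fun q => pderiv 0 q)^[k] Q := by
  induction k with
  | zero => rfl
  | succ k ih =>
    simp only [Function.iterate_succ_apply'] at ih ⊢
    rw [ih]; simp

/-- If `α ≠ 0`, `β = 1/α`, and `P` is homogeneous of degree `d ≥ 1` (for `deg λ = 1`,
`deg x_k = k`) and satisfies `(1/k!) ∂ᵏP/∂λᵏ = α ∂P/∂x_k` for all `k ≥ 1`, then
`P = γ · S_d(λ + β x₁/1!, β x₂/2!, β x₃/3!, …)` for some `γ ∈ ℂ`. -/
theorem stmt4 (α β : ℂ) (hα : α ≠ 0) (hβ : β = 1 / α) (d : ℕ) (hd : 1 ≤ d)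
    (P : MvPolynomial ℕ ℂ)
    (hhom : P.IsWeightedHomogeneous (fun k => if k = 0 then 1 else k) d)
    (hsys : ∀ k : ℕ, 1 ≤ k →
      C ((k.factorial : ℂ)⁻¹) * (fun q => pderiv 0 q)^[k] P = C α * pderiv k P) :
    ∃ γ : ℂ, P = C γ *
      aeval (fun k => if k = 1 then X 0 + C β * X 1
        else C (β * ((k.factorial : ℂ))⁻¹) * X k) (schur d) := by
  refine ⟨coeff (Finsupp.single 0 d) P * d.factorial, ?_⟩
  change P = C _ * aeval (gg β) (schur d)
  rw [← sub_eq_zero]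
  apply uniq α hα
  · intro k hk
    rw [iter_lin, mul_sub, hsys k hk, map_sub, mul_sub, pderiv_C_mul, gg0_iter, ggk β d k hk]
    congr 1
    split_ifs with h
    · have : (C ((k.factorial : ℂ)⁻¹) : MvPolynomial ℕ ℂ) = C α * C (β * (k.factorial : ℂ)⁻¹) := by
        rw [← C_mul, hβ]
        congr 1
        field_simp
      rw [this]
      simp only [smul_eq_mul, C_mul, smul_eq_C_mul]
      ring
    · simp
  · intro n
    rw [coeff_sub, coeff_C_mul, coeffQ]
    by_cases h : n = d
    · subst h
      have hf : ((n.factorial : ℂ)) ≠ 0 := by exact_mod_cast n.factorial_ne_zero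
      rw [if_pos rfl, mul_assoc, mul_inv_cancel₀ hf]; simp
    · rw [if_neg h, mul_zero, sub_zero]
      apply hhom.coeff_eq_zero
      rw [Finsupp.weight_single]
      simpa using h
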